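/- Let F be a field, V an F-vector space, g : V →ₗ[F] V finite-potent, and U ⊆ V a g-stable subspace. Then the restriction g|_U and the endomorphism ḡ of V/U induced by g are finite-potent, and the Tate traces are additive: for every finite-dimensional g-stable W ⊆ V with nilpotent induced endomorphism of V/W, every finite-dimensional (g|_U)-stable W_U ⊆ U with nilpotent induced endomorphism of U/W_U, and every finite-dimensional ḡ-stable W_Q ⊆ V/U with nilpotent induced endomorphism of (V/U)/W_Q, one has trace(g|_{W}) = trace(g|_{W_U}) + trace(ḡ|_{W_Q}). -/

import Mathlib

/-!
The trace is additive on short exact sequences of finite-dimensional spaces with compatible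
endomorphisms (`trace_add_of_exact`). Applied to `0 → W → W' → W'/W → 0`, where `g` acts
nilpotently on the last term, this shows that enlarging a trace witness `W` to `W'` does not change
the trace; comparing two witnesses with their sum, all witnesses give the same trace
(`trace_restrict_eq_of_pow_mem`).

Additivity along `U` then needs only one convenient choice of witnesses. If `W` is a witness for
`g`, then `W ∩ U` is one for `g|_U`, the image of `W` in `V ⧸ U` is one for the induced map, and
`0 → W ∩ U → W → (W + U)/U → 0` is exact.
-/

/-- An endomorphism `g` is finite-potent if some power `g ^ n` (with `n ≥ 1`) has
finite-dimensional range. -/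
def FinitePotent (F : Type*) [Field F] {V : Type*} [AddCommGroup V] [Module F V]
    (g : V →ₗ[F] V) : Prop :=
  ∃ n : ℕ, 1 ≤ n ∧ FiniteDimensional F (LinearMap.range (g ^ n))

/-- Additivity of the trace along a short exact sequence `0 → A → B → C → 0` of vector spaces,
with endomorphisms `a`, `b`, `c` intertwined by the maps of the sequence. -/
theorem trace_add_of_exact {F A B C : Type*} [Field F] [AddCommGroup A] [Module F A]
    [AddCommGroup B] [Module F B] [AddCommGroup C] [Module F C]
    [FiniteDimensional F A] [FiniteDimensional F B] [FiniteDimensional F C]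
    (i : A →ₗ[F] B) (p : B →ₗ[F] C) (hi : Function.Injective i) (hp : Function.Surjective p)
    (hip : Function.Exact i p) (a : A →ₗ[F] A) (b : B →ₗ[F] B) (c : C →ₗ[F] C)
    (hab : b ∘ₗ i = i ∘ₗ a) (hbc : p ∘ₗ b = c ∘ₗ p) :
    LinearMap.trace F B b = LinearMap.trace F A a + LinearMap.trace F C c := by
  obtain ⟨s, hs⟩ := p.exists_rightInverse_of_surjective (LinearMap.range_eq_top.2 hp)
  obtain ⟨r₀, hr₀⟩ := i.exists_leftInverse_of_injective (LinearMap.ker_eq_bot.2 hi)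
  have hs' (x) : p (s x) = x := LinearMap.congr_fun hs x
  have hr₀' (x) : r₀ (i x) = x := LinearMap.congr_fun hr₀ x
  -- Correcting `r₀` to vanish on the range of `s` gives a splitting `i r + s p = 1`.
  obtain ⟨r, hr⟩ : ∃ r : B →ₗ[F] A, r = r₀ ∘ₗ (LinearMap.id - s ∘ₗ p) := ⟨_, rfl⟩
  have hri : r ∘ₗ i = LinearMap.id := by
    ext x
    simp [hr, hip.apply_apply_eq_zero, hr₀']
  have hsum : i ∘ₗ r + s ∘ₗ p = LinearMap.id := by
    ext y
    obtain ⟨x, hx⟩ := (hip (y - s (p y))).1 (by simp [hs'])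
    simp [hr, ← hx, hr₀']
    simp [hx]
  have h1 : b = i ∘ₗ (a ∘ₗ r) + (b ∘ₗ s) ∘ₗ p := by
    rw [← LinearMap.comp_assoc, ← hab, LinearMap.comp_assoc, LinearMap.comp_assoc,
      ← LinearMap.comp_add, hsum, LinearMap.comp_id]
  rw [h1, map_add, LinearMap.trace_comp_comm' (a ∘ₗ r) i, LinearMap.trace_comp_comm' p (b ∘ₗ s),
    LinearMap.comp_assoc, hri, LinearMap.comp_id, ← LinearMap.comp_assoc, hbc,
    LinearMap.comp_assoc, hs, LinearMap.comp_id]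

/-- Nilpotency of the induced map on `V ⧸ W` means that some power of `g` maps `V` into `W`. -/
theorem exists_pow_mem_of_isNilpotent_mapQ {F V : Type*} [Field F] [AddCommGroup V] [Module F V]
    {g : V →ₗ[F] V} {W : Submodule F V} {hW : W ≤ W.comap g}
    (h : IsNilpotent (Submodule.mapQ W W g hW)) : ∃ n : ℕ, ∀ v, (g ^ n) v ∈ W := by
  obtain ⟨n, hn⟩ := h
  refine ⟨n, fun v => ?_⟩
  rw [← Submodule.mapQ_pow] at hn
  simpa using LinearMap.congr_fun hn (Submodule.Quotient.mk v)

/-- Enlarging a trace witness keeps the trace: `g` is nilpotent on the quotient `W' / W`. -/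
theorem trace_restrict_eq_of_le {F V : Type*} [Field F] [AddCommGroup V] [Module F V]
    (g : V →ₗ[F] V) {W W' : Submodule F V} [FiniteDimensional F W] [FiniteDimensional F W']
    (hle : W ≤ W') (hW : ∀ x ∈ W, g x ∈ W) (hW' : ∀ x ∈ W', g x ∈ W')
    {n : ℕ} (hn : ∀ v, (g ^ n) v ∈ W) :
    LinearMap.trace F W' (g.restrict hW') = LinearMap.trace F W (g.restrict hW) := by
  let K : Submodule F W' := W.comap W'.subtype
  have hK : K ≤ K.comap (g.restrict hW') := fun x hx => hW _ hx
  rw [trace_add_of_exact (Submodule.inclusion hle) K.mkQ (Submodule.inclusion_injective hle)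
    K.mkQ_surjective ?_ (g.restrict hW) (g.restrict hW') (K.mapQ K (g.restrict hW') hK)
    rfl rfl]
  · have : IsNilpotent (K.mapQ K (g.restrict hW') hK) := by
      refine ⟨n, ?_⟩
      rw [← Submodule.mapQ_pow]
      ext x
      simp only [LinearMap.comp_apply, Submodule.mkQ_apply, Submodule.mapQ_apply,
        LinearMap.zero_apply, Submodule.Quotient.mk_eq_zero]
      rw [Module.End.pow_restrict n]
      exact hn x
    rw [(LinearMap.isNilpotent_trace_of_isNilpotent this).eq_zero, add_zero]
  · rw [LinearMap.exact_iff, Submodule.ker_mkQ, Submodule.range_inclusion]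

/-- The Tate trace does not depend on the trace witness. -/
theorem trace_restrict_eq_of_pow_mem {F V : Type*} [Field F] [AddCommGroup V] [Module F V]
    (g : V →ₗ[F] V) {W W' : Submodule F V} [FiniteDimensional F W] [FiniteDimensional F W']
    (hW : ∀ x ∈ W, g x ∈ W) (hW' : ∀ x ∈ W', g x ∈ W')
    {n m : ℕ} (hn : ∀ v, (g ^ n) v ∈ W) (hm : ∀ v, (g ^ m) v ∈ W') :
    LinearMap.trace F W (g.restrict hW) = LinearMap.trace F W' (g.restrict hW') := by
  have hS : ∀ x ∈ W ⊔ W', g x ∈ W ⊔ W' := fun x hx =>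
    (sup_le (fun y hy => Submodule.mem_sup_left (hW y hy))
      (fun y hy => Submodule.mem_sup_right (hW' y hy)) : W ⊔ W' ≤ (W ⊔ W').comap g) hx
  rw [← trace_restrict_eq_of_le g le_sup_left hW hS hn,
    ← trace_restrict_eq_of_le g le_sup_right hW' hS hm]

/-- Axiom T2 of Tate's trace: for a finite-potent `g` and a `g`-stable subspace `U`, the
restriction `g|_U` and the induced endomorphism of `V ⧸ U` are finite-potent, and the Tate
trace (computed on any trace witnesses) is additive:
`tr_V(g) = tr_U(g|_U) + tr_{V/U}(ḡ)`. -/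
theorem tateTrace_additive
    (F : Type*) [Field F] (V : Type*) [AddCommGroup V] [Module F V]
    (g : V →ₗ[F] V) (hg : FinitePotent F g)
    (U : Submodule F V) (hU : U ≤ U.comap g) :
    FinitePotent F (g.restrict (p := U) (q := U) fun x hx => hU hx) ∧
    FinitePotent F (Submodule.mapQ U U g hU) ∧
    ∀ (W : Submodule F V), FiniteDimensional F W →
      ∀ (hW : W ≤ W.comap g), IsNilpotent (Submodule.mapQ W W g hW) →
    ∀ (WU : Submodule F U), FiniteDimensional F WU →
      ∀ (hWU : WU ≤ WU.comap (g.restrict (p := U) (q := U) fun x hx => hU hx)),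
        IsNilpotent (Submodule.mapQ WU WU
          (g.restrict (p := U) (q := U) fun x hx => hU hx) hWU) →
    ∀ (WQ : Submodule F (V ⧸ U)), FiniteDimensional F WQ →
      ∀ (hWQ : WQ ≤ WQ.comap (Submodule.mapQ U U g hU)),
        IsNilpotent (Submodule.mapQ WQ WQ (Submodule.mapQ U U g hU) hWQ) →
    LinearMap.trace F W (g.restrict (p := W) (q := W) fun x hx => hW hx) =
      LinearMap.trace F WU
        ((g.restrict (p := U) (q := U) fun x hx => hU hx).restrict
          (p := WU) (q := WU) fun x hx => hWU hx) +
      LinearMap.trace F WQ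
        ((Submodule.mapQ U U g hU).restrict (p := WQ) (q := WQ) fun x hx => hWQ hx) := by
  refine ⟨?_, ?_, ?_⟩
  · obtain ⟨n, hn, hfin⟩ := hg
    refine ⟨n, hn, ?_⟩
    rw [Module.End.pow_restrict n]
    have hle : (LinearMap.range ((g ^ n).restrict (p := U) (q := U)
        (Module.End.pow_apply_mem_of_forall_mem n fun x hx => hU hx))).map U.subtype
        ≤ LinearMap.range (g ^ n) := by
      rintro _ ⟨_, ⟨x, rfl⟩, rfl⟩
      exact ⟨x, rfl⟩
    have := Submodule.finiteDimensional_of_le hle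
    exact (Submodule.equivMapOfInjective U.subtype U.injective_subtype _).symm.finiteDimensional
  · obtain ⟨n, hn, hfin⟩ := hg
    refine ⟨n, hn, ?_⟩
    rw [← Submodule.mapQ_pow]
    refine Submodule.finiteDimensional_of_le (S₂ := (LinearMap.range (g ^ n)).map U.mkQ) ?_
    rintro _ ⟨x, rfl⟩
    obtain ⟨x, rfl⟩ := U.mkQ_surjective x
    exact ⟨_, ⟨x, rfl⟩, rfl⟩
  · intro W _ hW hWn WU _ hWU hWUn WQ _ hWQ hWQn
    obtain ⟨n, hn⟩ := exists_pow_mem_of_isNilpotent_mapQ hWn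
    obtain ⟨k, hk⟩ := exists_pow_mem_of_isNilpotent_mapQ hWUn
    obtain ⟨l, hl⟩ := exists_pow_mem_of_isNilpotent_mapQ hWQn
    -- Replace `WU` by `W ∩ U` and `WQ` by the image of `W`.
    let A : Submodule F U := W.comap U.subtype
    let C : Submodule F (V ⧸ U) := W.map U.mkQ
    let i : A →ₗ[F] W := U.subtype.restrict (p := A) (q := W) fun x hx => hx
    let p : W →ₗ[F] C := U.mkQ.restrict (p := W) (q := C) fun x hx => ⟨x, hx, rfl⟩
    have hi : Function.Injective i := fun x y h =>
      Subtype.ext (Subtype.ext (congrArg (fun w : W => (w : V)) h))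
    have : FiniteDimensional F A := FiniteDimensional.of_injective i hi
    have hA : ∀ x ∈ A, (g.restrict (p := U) (q := U) fun x hx => hU hx) x ∈ A :=
      fun x hx => hW hx
    have hC : ∀ x ∈ C, Submodule.mapQ U U g hU x ∈ C := by
      rintro _ ⟨x, hx, rfl⟩
      exact ⟨g x, hW hx, rfl⟩
    have hAn : ∀ v, ((g.restrict (p := U) (q := U) fun x hx => hU hx) ^ n) v ∈ A := by
      intro v
      rw [Module.End.pow_restrict n]
      exact hn v
    have hCn : ∀ v, (Submodule.mapQ U U g hU ^ n) v ∈ C := by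
      intro v
      obtain ⟨v, rfl⟩ := U.mkQ_surjective v
      rw [← Submodule.mapQ_pow]
      exact ⟨_, hn v, rfl⟩
    rw [trace_restrict_eq_of_pow_mem (W := WU) _ (fun x hx => hWU hx) hA hk hAn,
      trace_restrict_eq_of_pow_mem (W := WQ) _ (fun x hx => hWQ hx) hC hl hCn]
    refine trace_add_of_exact i p hi ?_ ?_ _ _ _ rfl rfl
    · rintro ⟨_, x, hx, rfl⟩
      exact ⟨⟨x, hx⟩, rfl⟩
    · intro x
      constructor
      · intro h
        have hx : (x : V) ∈ U :=
          (Submodule.Quotient.mk_eq_zero U).1 (congrArg (fun c : C => (c : V ⧸ U)) h)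
        exact ⟨⟨⟨x, hx⟩, x.2⟩, rfl⟩
      · rintro ⟨y, rfl⟩
        exact Subtype.ext ((Submodule.Quotient.mk_eq_zero U).2 y.1.2)
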